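/- (Entropy production decomposition of the Lax–Friedrichs flux.) For any real g, any real α, and any two states L, R with zero bottom values, the Lax–Friedrichs flux F̂ᴸᶠ := ⟨F₁⟩ − (α/2)·[U] satisfies the exact algebraic identity [V]·F̂ᴸᶠ − [ψ₁] + [Φ]⟨hBx⟩ = A + B + C, where A := (g/4)·[h]²·([vx] − 2α), B := ¼·([vx]² + [Bx]²)·([h·vx] − 2α⟨h⟩) − ½·[h·Bx]·[vx]·[Bx], and C := ¼·([vy]² + [By]²)·([h·vx] − 2α⟨h⟩) − ½·[h·Bx]·[vy]·[By]. -/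

import Mathlib

open scoped BigOperators
noncomputable section
open Matrix

/-- A state of the 1D (x-split) shallow water MHD system together with
the bottom topography value `b`. -/
structure SWState where
  h : ℝ
  vx : ℝ
  vy : ℝ
  Bx : ℝ
  By : ℝ
  b : ℝ

namespace SWMHD

/-- Mean `⟨a⟩ = (a_L + a_R)/2` of an expression in the state variables. -/
def amean (f : SWState → ℝ) (L R : SWState) : ℝ := (f L + f R) / 2

/-- Jump `[a] = a_R − a_L` of an expression in the state variables. -/
def ajump (f : SWState → ℝ) (L R : SWState) : ℝ := f R - f L

/-- Entropy variables `V`. -/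
def entropyVars (g : ℝ) (U : SWState) : Fin 5 → ℝ :=
  ![g * (U.h + U.b) - (U.vx ^ 2 + U.vy ^ 2 + U.Bx ^ 2 + U.By ^ 2) / 2,
    U.vx, U.vy, U.Bx, U.By]

/-- Jump of the entropy variables. -/
def vjump (g : ℝ) (L R : SWState) : Fin 5 → ℝ :=
  fun k => entropyVars g R k - entropyVars g L k

/-- Entropy potential `ψ₁ = ½ g h² vx`. -/
def psi1 (g : ℝ) (U : SWState) : ℝ := g * U.h ^ 2 * U.vx / 2

/-- `Φ = vx Bx + vy By`. -/
def Phi (U : SWState) : ℝ := U.vx * U.Bx + U.vy * U.By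

/-- The physical flux `F₁` of the x-split system. -/
def physFlux (g : ℝ) (U : SWState) : Fin 5 → ℝ :=
  ![U.h * U.vx,
    U.h * U.vx ^ 2 - U.h * U.Bx ^ 2 + g * U.h ^ 2 / 2,
    U.h * U.vx * U.vy - U.h * U.Bx * U.By,
    0,
    U.h * (U.vx * U.By - U.Bx * U.vy)]

/-- The physical entropy flux `q₁`. -/
def q1 (g : ℝ) (U : SWState) : ℝ :=
  ((U.vx ^ 2 + U.vy ^ 2 + U.Bx ^ 2 + U.By ^ 2) / 2 + g * U.h + g * U.b) * U.h * U.vx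
    - U.h * U.Bx * (U.vx * U.Bx + U.vy * U.By)

/-- The entropy conservative (EC) two-point flux `F̃₁(L,R)`. -/
def ecFlux (g : ℝ) (L R : SWState) : Fin 5 → ℝ :=
  ![amean (fun U => U.h) L R * amean (fun U => U.vx) L R,
    amean (fun U => U.h) L R * (amean (fun U => U.vx) L R) ^ 2
      + g / 2 * amean (fun U => U.h ^ 2) L R
      - amean (fun U => U.h * U.Bx) L R * amean (fun U => U.Bx) L R
      + g * (amean (fun U => U.h * U.b) L R
             - amean (fun U => U.h) L R * amean (fun U => U.b) L R),
    amean (fun U => U.h) L R * amean (fun U => U.vx) L R * amean (fun U => U.vy) L R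
      - amean (fun U => U.h * U.Bx) L R * amean (fun U => U.By) L R,
    amean (fun U => U.h) L R * amean (fun U => U.vx) L R * amean (fun U => U.Bx) L R
      - amean (fun U => U.h * U.Bx) L R * amean (fun U => U.vx) L R,
    amean (fun U => U.h) L R * amean (fun U => U.vx) L R * amean (fun U => U.By) L R
      - amean (fun U => U.h * U.Bx) L R * amean (fun U => U.vy) L R]

/-- The entropy conservation condition `[V]·F = [ψ₁] − [Φ]⟨hBx⟩ + g[h b vx] − g[h vx]⟨b⟩`
for a two-point numerical flux `F`. -/
def ecCondition (g : ℝ) (F : Fin 5 → ℝ) (L R : SWState) : Prop :=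
  vjump g L R ⬝ᵥ F
    = ajump (psi1 g) L R
      - ajump Phi L R * amean (fun U => U.h * U.Bx) L R
      + g * ajump (fun U => U.h * U.b * U.vx) L R
      - g * ajump (fun U => U.h * U.vx) L R * amean (fun U => U.b) L R

/-- The numerical entropy flux `q̃` built from a two-point flux value `F`. -/
def numEntropyFlux (g : ℝ) (F : Fin 5 → ℝ) (L R : SWState) : ℝ :=
  (fun k => (entropyVars g L k + entropyVars g R k) / 2) ⬝ᵥ F
    + amean Phi L R * amean (fun U => U.h * U.Bx) L R
    - amean (psi1 g) L R
    + g * amean (fun U => U.h * U.vx) L R * amean (fun U => U.b) L R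
    - g * amean (fun U => U.h * U.b * U.vx) L R

/-- Conservative variables `U = (h, h vx, h vy, h Bx, h By)`. -/
def consVar (U : SWState) : Fin 5 → ℝ :=
  ![U.h, U.h * U.vx, U.h * U.vy, U.h * U.Bx, U.h * U.By]

/-- The source vector `Ψ = (0,0,0,vx,vy)`. -/
def PsiVec (U : SWState) : Fin 5 → ℝ := ![0, 0, 0, U.vx, U.vy]

/-- The bottom-topography source vector `G₁ = (0, g h, 0, 0, 0)`. -/
def G1Vec (g : ℝ) (U : SWState) : Fin 5 → ℝ := ![0, g * U.h, 0, 0, 0]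

/-- The mathematical entropy (total energy). -/
def entropyFn (g : ℝ) (U : SWState) : ℝ :=
  U.h * (U.vx ^ 2 + U.vy ^ 2 + U.Bx ^ 2 + U.By ^ 2) / 2 + g * U.h ^ 2 / 2 + g * U.h * U.b

end SWMHD

open SWMHD

/-!
All discrepancies between products and means come from the Leibniz rule `[ac] = ⟨a⟩[c] + [a]⟨c⟩`
and the covariance formula `⟨ac⟩ = ⟨a⟩⟨c⟩ + ¼[a][c]`. With `m = h·vx` and `n = h·Bx`, the flux
transports each of `vx, vy, Bx, By` by `m` and couples the pairs `(vx, Bx)` and `(vy, By)` through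
`n`. Hence every field `w` contributes `¼[w]²[m]`, every pair `(u, B)` contributes `-½[n][u][B]`,
and gravity contributes `¼g[h]²[vx]`. The numerical dissipation contributes `-α/2`
times `[V]·[U] = g[h][h + b] + ⟨h⟩ ∑ [w]²`.
-/

namespace SWMHD

section JumpMean

variable (a c n u w : SWState → ℝ) (L R : SWState)

lemma ajump_mul :
    ajump (fun U => a U * c U) L R
      = amean a L R * ajump c L R + ajump a L R * amean c L R := by
  simp only [ajump, amean]
  ring

lemma amean_mul :
    amean (fun U => a U * c U) L R
      = amean a L R * amean c L R + ajump a L R * ajump c L R / 4 := by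
  simp only [ajump, amean]
  ring

lemma ajump_sq : ajump (fun U => a U ^ 2) L R = 2 * amean a L R * ajump a L R := by
  simp only [pow_two, ajump_mul]
  ring

lemma ajump_mul_amean_mul_self :
    ajump w L R * amean (fun U => a U * w U) L R
      = amean w L R * ajump w L R * amean a L R + ajump w L R ^ 2 * ajump a L R / 4 := by
  rw [amean_mul]
  ring

lemma ajump_mul_amean_mul_add_swap :
    ajump u L R * amean (fun U => n U * w U) L R + ajump w L R * amean (fun U => n U * u U) L R
      = ajump (fun U => u U * w U) L R * amean n L R
        + ajump n L R * ajump u L R * ajump w L R / 2 := by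
  rw [amean_mul, amean_mul, ajump_mul]
  ring

lemma ajump_mul_amean_mul_add_half_ajump_mul_amean_sq :
    ajump a L R * amean (fun U => a U * u U) L R + ajump u L R * amean (fun U => a U ^ 2) L R / 2
      = ajump (fun U => a U ^ 2 * u U) L R / 2 + ajump a L R ^ 2 * ajump u L R / 4 := by
  rw [ajump_mul (fun U => a U ^ 2), ajump_sq, amean_mul]
  ring

end JumpMean

variable (g α : ℝ) (L R : SWState)

lemma vjump_eq :
    vjump g L R
      = ![g * (ajump (·.h) L R + ajump (·.b) L R)
            - (amean (·.vx) L R * ajump (·.vx) L R + amean (·.vy) L R * ajump (·.vy) L R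
              + amean (·.Bx) L R * ajump (·.Bx) L R + amean (·.By) L R * ajump (·.By) L R),
          ajump (·.vx) L R, ajump (·.vy) L R, ajump (·.Bx) L R, ajump (·.By) L R] := by
  ext k
  fin_cases k <;>
    simp only [vjump, entropyVars, ajump, amean, Fin.reduceFinMk, cons_val]
  ring

-- The vanishing fourth component is written as `⟨m·Bx⟩ - ⟨n·vx⟩` to match the other three.
lemma amean_physFlux_eq :
    (fun k => amean (physFlux g · k) L R)
      = ![amean (fun U => U.h * U.vx) L R,
          amean (fun U => U.h * U.vx * U.vx) L R - amean (fun U => U.h * U.Bx * U.Bx) L R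
            + g * amean (fun U => U.h ^ 2) L R / 2,
          amean (fun U => U.h * U.vx * U.vy) L R - amean (fun U => U.h * U.Bx * U.By) L R,
          amean (fun U => U.h * U.vx * U.Bx) L R - amean (fun U => U.h * U.Bx * U.vx) L R,
          amean (fun U => U.h * U.vx * U.By) L R - amean (fun U => U.h * U.Bx * U.vy) L R] := by
  ext k
  fin_cases k <;> simp only [physFlux, amean, Fin.reduceFinMk, cons_val] <;> ring

lemma vjump_dotProduct_ajump_consVar :
    vjump g L R ⬝ᵥ (fun k => ajump (consVar · k) L R)
      = g * ajump (·.h) L R * (ajump (·.h) L R + ajump (·.b) L R)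
        + amean (·.h) L R * (ajump (·.vx) L R ^ 2 + ajump (·.vy) L R ^ 2
          + ajump (·.Bx) L R ^ 2 + ajump (·.By) L R ^ 2) := by
  simp only [vjump_eq, dotProduct, Fin.sum_univ_five, consVar, cons_val, ajump_mul]
  ring

lemma ajump_psi1 :
    ajump (psi1 g) L R = g * ajump (fun U => U.h ^ 2 * U.vx) L R / 2 := by
  simp only [ajump, psi1]
  ring

lemma ajump_Phi :
    ajump Phi L R = ajump (fun U => U.vx * U.Bx) L R + ajump (fun U => U.vy * U.By) L R := by
  simp only [ajump, Phi]
  ring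

lemma vjump_dotProduct_amean_physFlux :
    vjump g L R ⬝ᵥ (fun k => amean (physFlux g · k) L R)
      = ajump (psi1 g) L R - ajump Phi L R * amean (fun U => U.h * U.Bx) L R
        + g * ajump (·.b) L R * amean (fun U => U.h * U.vx) L R
        + g / 4 * ajump (·.h) L R ^ 2 * ajump (·.vx) L R
        + (ajump (·.vx) L R ^ 2 + ajump (·.vy) L R ^ 2 + ajump (·.Bx) L R ^ 2
          + ajump (·.By) L R ^ 2) * ajump (fun U => U.h * U.vx) L R / 4
        - ajump (fun U => U.h * U.Bx) L R
          * (ajump (·.vx) L R * ajump (·.Bx) L R + ajump (·.vy) L R * ajump (·.By) L R) / 2 := by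
  have gravity := ajump_mul_amean_mul_add_half_ajump_mul_amean_sq (·.h) (·.vx) L R
  have transport := ajump_mul_amean_mul_self (fun U => U.h * U.vx) (L := L) (R := R)
  have coupling := ajump_mul_amean_mul_add_swap (fun U => U.h * U.Bx) (L := L) (R := R)
  rw [amean_physFlux_eq, vjump_eq, ajump_psi1, ajump_Phi]
  simp only [dotProduct, Fin.sum_univ_five, cons_val]
  linear_combination g * gravity
    + transport (·.vx) + transport (·.vy) + transport (·.Bx) + transport (·.By)
    - coupling (·.vx) (·.Bx) - coupling (·.vy) (·.By)

/-- The Lax–Friedrichs flux `⟨F₁⟩ − (α/2)[U]`, with `α` the numerical viscosity. -/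
def laxFriedrichsFlux : Fin 5 → ℝ :=
  fun k => amean (physFlux g · k) L R - α / 2 * ajump (consVar · k) L R

lemma vjump_dotProduct_laxFriedrichsFlux :
    vjump g L R ⬝ᵥ laxFriedrichsFlux g α L R
      = vjump g L R ⬝ᵥ (fun k => amean (physFlux g · k) L R)
        - α / 2 * (vjump g L R ⬝ᵥ (fun k => ajump (consVar · k) L R)) := by
  rw [← smul_eq_mul (α / 2), ← dotProduct_smul, ← dotProduct_sub]
  rfl

end SWMHD

theorem laxFriedrichs_entropy_decomposition_general (g α : ℝ) (L R : SWState) :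
    vjump g L R ⬝ᵥ laxFriedrichsFlux g α L R
      - ajump (psi1 g) L R
      + ajump Phi L R * amean (fun U => U.h * U.Bx) L R
    = g / 4 * (ajump (fun U => U.h) L R) ^ 2 * (ajump (fun U => U.vx) L R - 2 * α)
      + ((1 / 4) * ((ajump (fun U => U.vx) L R) ^ 2 + (ajump (fun U => U.Bx) L R) ^ 2)
            * (ajump (fun U => U.h * U.vx) L R - 2 * α * amean (fun U => U.h) L R)
          - (1 / 2) * ajump (fun U => U.h * U.Bx) L R
            * ajump (fun U => U.vx) L R * ajump (fun U => U.Bx) L R)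
      + ((1 / 4) * ((ajump (fun U => U.vy) L R) ^ 2 + (ajump (fun U => U.By) L R) ^ 2)
            * (ajump (fun U => U.h * U.vx) L R - 2 * α * amean (fun U => U.h) L R)
          - (1 / 2) * ajump (fun U => U.h * U.Bx) L R
            * ajump (fun U => U.vy) L R * ajump (fun U => U.By) L R)
      + g * ajump (·.b) L R
          * (amean (fun U => U.h * U.vx) L R - α / 2 * ajump (·.h) L R) := by
  rw [vjump_dotProduct_laxFriedrichsFlux, vjump_dotProduct_amean_physFlux,
    vjump_dotProduct_ajump_consVar]
  ring

/-- entropy production decomposition of the Lax–Friedrichs flux,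
an exact algebraic identity `[V]·F̂ᴸᶠ − [ψ₁] + [Φ]⟨hBx⟩ = A + B + C`. -/
theorem laxFriedrichs_entropy_decomposition (g α : ℝ) (L R : SWState)
    (hbL : L.b = 0) (hbR : R.b = 0) :
    vjump g L R ⬝ᵥ
        (fun k => (physFlux g L k + physFlux g R k) / 2 - α / 2 * (consVar R k - consVar L k))
      - ajump (psi1 g) L R
      + ajump Phi L R * amean (fun U => U.h * U.Bx) L R
    = g / 4 * (ajump (fun U => U.h) L R) ^ 2 * (ajump (fun U => U.vx) L R - 2 * α)
      + ((1 / 4) * ((ajump (fun U => U.vx) L R) ^ 2 + (ajump (fun U => U.Bx) L R) ^ 2)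
            * (ajump (fun U => U.h * U.vx) L R - 2 * α * amean (fun U => U.h) L R)
          - (1 / 2) * ajump (fun U => U.h * U.Bx) L R
            * ajump (fun U => U.vx) L R * ajump (fun U => U.Bx) L R)
      + ((1 / 4) * ((ajump (fun U => U.vy) L R) ^ 2 + (ajump (fun U => U.By) L R) ^ 2)
            * (ajump (fun U => U.h * U.vx) L R - 2 * α * amean (fun U => U.h) L R)
          - (1 / 2) * ajump (fun U => U.h * U.Bx) L R
            * ajump (fun U => U.vy) L R * ajump (fun U => U.By) L R) := by
  have flat : ajump (·.b) L R = 0 := by rw [ajump, hbL, hbR, sub_self]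
  exact (laxFriedrichs_entropy_decomposition_general g α L R).trans (by
    rw [flat, mul_zero, zero_mul, add_zero])
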